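/- arXiv:2204.08076 — 3 statements merged into one kernel-verified Lean document; each statement's English description precedes it below -/
import Mathlib

section
/- In the parabolic case α = β = 1 (so X = [[1,1],[0,1]] and Y = [[1,0],[z,1]]), for any z ∈ ℂ and any Farey neighbours p/q < r/s in lowest terms with p, r ≥ 0, 1 ≤ s < q, qr − ps = 1, and both fractions in [0,1], one has Φ_{p/q}(z)·Φ_{r/s}(z) + Φ_{(p+r)/(q+s)}(z) + Φ_{(p−r)/(q−s)}(z) = 8. -/
/-- Modified ceiling: `⌈x⌉` if `x ∉ ℤ`, and `x + 1` if `x ∈ ℤ`. -/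
def mceil (x : ℚ) : ℤ := if x.den = 1 then x.num + 1 else ⌈x⌉

/-- The sign `ε_i = (−1)^{⌈pi/q⌉' + i + 1}` of the `i`-th letter of the Farey word `W_{p/q}`. -/
def fareySign (p q i : ℕ) : ℤˣ := (-1) ^ (mceil ((p * i : ℚ) / q) + (i : ℤ) + 1)

/-- The matrix `X = [[α, 1], [0, α⁻¹]]`. -/
noncomputable def Xmat (α : ℂ) : Matrix (Fin 2) (Fin 2) ℂ := !![α, 1; 0, α⁻¹]

/-- The matrix `Y = [[β, 0], [z, β⁻¹]]`. -/
noncomputable def Ymat (β z : ℂ) : Matrix (Fin 2) (Fin 2) ℂ := !![β, 0; z, β⁻¹]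

/-- The `i`-th letter (`1 ≤ i ≤ 2q`) of the Farey word `W_{p/q}`, interpreted as a matrix:
it is `Y^{ε_i}` if `i` is odd and `X^{ε_i}` if `i` is even. -/
noncomputable def fareyLetterM (α β z : ℂ) (p q i : ℕ) : Matrix (Fin 2) (Fin 2) ℂ :=
  let M := if i % 2 = 1 then Ymat β z else Xmat α
  if fareySign p q i = 1 then M else M⁻¹

/-- The Farey word `W_{p/q}(z)`, the product `ℓ_1 ℓ_2 ⋯ ℓ_{2q}` of its letters interpreted
as matrices. -/
noncomputable def fareyWord (α β z : ℂ) (p q : ℕ) : Matrix (Fin 2) (Fin 2) ℂ :=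
  ((List.range (2 * q)).map (fun j => fareyLetterM α β z p q (j + 1))).prod

/-- The Farey polynomial `Φ_{p/q}(z) = tr W_{p/q}(z)`. -/
noncomputable def fareyPoly (α β z : ℂ) (p q : ℕ) : ℂ := Matrix.trace (fareyWord α β z p q)

/-!
The letters of `W_{p/q}` at the positions `q + k` and `q - k` are inverse to each other, so
`W_{p/q} = N_{p/q} x` with `N_{p/q}` a conjugate of the middle letter. Concatenating `W_{p/q}` and
`W_{r/s}` gives the word of the mediant except that its middle letter is inverted; hence
`W_{p/q} N_{r/s} = N_{(p+r)/(q+s)}⁻¹` in any group. Write `a`, `b`, `c`, `d` for `p/q`, `r/s`, their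
mediant and their difference. As `a` is the mediant of `d` and `b`, also `W_d N_b = N_a⁻¹`.
In `SL₂`, expand `tr W_a · tr W_b = tr (W_a W_b) + tr (W_a W_b⁻¹)`. The first summand is
`tr (N_c⁻¹ x)` and pairs with `tr W_c = tr (N_c x)` to give `tr N_c · tr x`; the second one is
`tr (N_a N_b⁻¹)` and pairs with `tr W_d = tr (N_a N_b)` to give `tr N_a · tr N_b`.
-/

open scoped MatrixGroups

section SeqProd

/-- The product `f 1 * f 2 * ⋯ * f n`, indexed from `1` like the letters of a Farey word. -/
def seqProd {M : Type*} [Monoid M] (f : ℕ → M) (n : ℕ) : M :=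
  ((List.range n).map fun j => f (j + 1)).prod

section Monoid

variable {M : Type*} [Monoid M]

@[simp]
theorem seqProd_zero (f : ℕ → M) : seqProd f 0 = 1 := rfl

theorem seqProd_succ (f : ℕ → M) (n : ℕ) : seqProd f (n + 1) = seqProd f n * f (n + 1) :=
  List.prod_range_succ _ n

theorem seqProd_add (f : ℕ → M) (m n : ℕ) :
    seqProd f (m + n) = seqProd f m * seqProd (fun k => f (m + k)) n := by
  induction n with
  | zero => simp
  | succ n ih => rw [← add_assoc, seqProd_succ, ih, seqProd_succ, mul_assoc, add_assoc]

theorem seqProd_congr {f g : ℕ → M} {n : ℕ} (h : ∀ i, 1 ≤ i → i ≤ n → f i = g i) :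
    seqProd f n = seqProd g n := by
  refine congrArg List.prod (List.map_congr_left fun j hj => h _ (by omega) ?_)
  exact List.mem_range.1 hj

end Monoid

variable {G : Type*} [Group G]

theorem seqProd_eq_conj_of_antisymm {f : ℕ → G} {n : ℕ}
    (hf : ∀ k, 1 ≤ k → k ≤ n → f (n + 1 + k) = (f (n + 1 - k))⁻¹) :
    seqProd f (2 * n + 1) = seqProd f n * f (n + 1) * (seqProd f n)⁻¹ := by
  have partial_prod (k : ℕ) (hk : k ≤ n) : seqProd f (n + 1 + k) =
      seqProd f n * f (n + 1) * (seqProd f n)⁻¹ * seqProd f (n - k) := by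
    induction k with
    | zero => simp [seqProd_succ]
    | succ k ih =>
      have h_last : f (n + 1 + k + 1) = (f (n - k))⁻¹ := by
        rw [add_assoc _ k, hf _ (by omega) hk, Nat.add_sub_add_right]
      have h_pred : seqProd f (n - k) = seqProd f (n - (k + 1)) * f (n - k) := by
        rw [show n - k = n - (k + 1) + 1 by omega, seqProd_succ]
      rw [← add_assoc, seqProd_succ, ih (by omega), h_last, h_pred, mul_assoc _ (_ * _),
        mul_inv_cancel_right]
  simpa [two_mul, add_right_comm] using partial_prod n le_rfl

theorem seqProd_update_inv_of_antisymm {f : ℕ → G} {n : ℕ}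
    (hf : ∀ k, 1 ≤ k → k ≤ n → f (n + 1 + k) = (f (n + 1 - k))⁻¹) :
    seqProd (Function.update f (n + 1) (f (n + 1))⁻¹) (2 * n + 1) =
      (seqProd f (2 * n + 1))⁻¹ := by
  have h_ne (i : ℕ) (hi : i ≠ n + 1) : Function.update f (n + 1) (f (n + 1))⁻¹ i = f i :=
    Function.update_of_ne hi _ _
  rw [seqProd_eq_conj_of_antisymm hf, seqProd_eq_conj_of_antisymm fun k h1 h2 => by
      rw [h_ne _ (by omega), h_ne _ (by omega), hf k h1 h2],
    seqProd_congr fun i _ hi => h_ne i (by omega), Function.update_self]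
  group

end SeqProd

section Floors

theorem div_add_div_add_one_of_add_eq_mul {a b n c : ℕ} (ha : ¬ n ∣ a) (h : a + b = n * c) :
    a / n + b / n + 1 = c := by
  rcases n.eq_zero_or_pos with rfl | hn
  · exact absurd (by omega) ha
  have : 0 < a % n := Nat.pos_of_ne_zero fun h0 => ha (Nat.dvd_of_mod_eq_zero h0)
  have ha_lt : a % n < n := Nat.mod_lt a hn
  have hb_lt : b % n < n := Nat.mod_lt b hn
  have h_eq : n * (a / n + b / n) + (a % n + b % n) = n * c := by
    rw [← h]
    linear_combination Nat.div_add_mod a n + Nat.div_add_mod b n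
  have h_lower : a / n + b / n < c := Nat.lt_of_mul_lt_mul_left (a := n) (by omega)
  have h_upper : c < a / n + b / n + 2 := by
    refine Nat.lt_of_mul_lt_mul_left (a := n) ?_
    rw [mul_add]
    omega
  omega

variable {p q r s : ℕ}

theorem coprime_left_of_neighbours (h : q * r = p * s + 1) : p.Coprime q := by
  rw [← Nat.isCoprime_iff_coprime]
  exact ⟨-s, r, by zify at h; linear_combination h⟩

theorem coprime_right_of_neighbours (h : q * r = p * s + 1) : r.Coprime s := by
  rw [← Nat.isCoprime_iff_coprime]
  exact ⟨q, -p, by zify at h; linear_combination h⟩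

theorem mul_add_div_add_one_of_neighbours (hq : 0 < q) (h : q * r = p * s + 1) :
    p * (q + s) / q + 1 = p + r := by
  obtain ⟨t, rfl⟩ : ∃ t, r = t + 1 := Nat.exists_eq_succ_of_ne_zero (by rintro rfl; omega)
  rw [← add_assoc, Nat.add_right_cancel_iff]
  apply Nat.div_eq_of_lt_le <;> nlinarith

theorem div_eq_of_mul_eq_mul_add {k a d n t : ℕ} (h : k * a = k * d * n + t) (ht : t < k * d) :
    a / d = n := by
  have hkd : 0 < k * d := by omega
  rw [← Nat.mul_div_mul_left a d (Nat.pos_of_mul_pos_right hkd), h, Nat.mul_add_div hkd,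
    Nat.div_eq_of_lt ht, add_zero]

theorem mediant_mul_div_left (hs : 0 < s) (h : q * r = p * s + 1) {i : ℕ}
    (hi : i ≤ 2 * q) (hne : i ≠ q + s) : (p + r) * i / (q + s) = p * i / q := by
  have hq : 0 < q := Nat.pos_of_ne_zero (by rintro rfl; omega)
  have h_div : q * (p * i / q) + p * i % q = p * i := Nat.div_add_mod _ _
  have h_lt : p * i % q < q := Nat.mod_lt _ hq
  -- If the remainder is `q - 1`, then `p i ≡ p s` modulo `q`, so `i - s` is a multiple of `q`.
  have h_last (hm : p * i % q + 1 = q) : i < q + s := by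
    by_contra! hge
    obtain ⟨k, rfl⟩ : ∃ k, i = s + k := Nat.exists_eq_add_of_le (by omega)
    have h_dvd : q ∣ p * k := (Nat.dvd_add_right (dvd_mul_right q r)).1
      ⟨p * (s + k) / q + 1, by linear_combination h + hm - h_div⟩
    have hk := Nat.eq_of_dvd_of_lt_two_mul (by omega)
      ((coprime_left_of_neighbours h).symm.dvd_of_dvd_mul_left h_dvd) (by omega)
    omega
  generalize p * i / q = n at *
  generalize p * i % q = m at *
  refine div_eq_of_mul_eq_mul_add (k := q) (t := (q + s) * m + i)
    (by linear_combination i * h - (q + s) * h_div) ?_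
  rcases eq_or_ne (m + 1) q with hm | hm
  · nlinarith [h_last hm]
  · nlinarith [show m + 2 ≤ q by omega]

theorem mediant_mul_div_right (hq : 0 < q) (h : q * r = p * s + 1) {j : ℕ} (hj_pos : 0 < j)
    (hj : j ≤ 2 * s) (hne : q + j ≠ s) :
    (p + r) * (2 * q + j) / (q + s) = 2 * p + r * j / s := by
  have h_div : s * (r * j / s) + r * j % s = r * j := Nat.div_add_mod _ _
  have h_lt : r * j % s < s := Nat.mod_lt _ (by omega)
  -- If the remainder is `s - 1`, then `r j ≡ -r q` modulo `s`, so `q + j` is a multiple of `s`.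
  have h_last (hm : r * j % s + 1 = s) : s < q + j := by
    have h_dvd : s ∣ r * (q + j) :=
      ⟨p + r * j / s + 1, by linear_combination h + hm - h_div⟩
    have h_le : s ≤ q + j := Nat.le_of_dvd (by omega)
      ((coprime_right_of_neighbours h).symm.dvd_of_dvd_mul_left h_dvd)
    omega
  generalize r * j / s = n at *
  generalize r * j % s = m at *
  obtain ⟨l, hl⟩ : ∃ l, 2 * s = j + l := Nat.exists_eq_add_of_le hj
  refine div_eq_of_mul_eq_mul_add (k := s) (t := (q + s) * m + l) ?_ ?_
  · zify at *
    linear_combination (2 * s - j : ℤ) * h - (q + s) * h_div + hl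
  · rcases eq_or_ne (m + 1) s with hm | hm
    · nlinarith [h_last hm]
    · nlinarith [show m + 2 ≤ s by omega]

end Floors

section Signs

theorem mceil_eq_floor_add_one (x : ℚ) : mceil x = ⌊x⌋ + 1 := by
  rw [mceil]
  split_ifs with hx
  · rw [← (Rat.den_eq_one_iff x).1 hx, Int.floor_intCast, Rat.num_intCast]
  · rw [Int.ceil_eq_floor_add_one_iff_notMem]
    rintro ⟨n, rfl⟩
    exact hx (Rat.den_intCast n)

theorem fareySign_eq_neg_one_pow (p q i : ℕ) : fareySign p q i = (-1) ^ (p * i / q + i) := by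
  rw [fareySign, mceil_eq_floor_add_one, ← Nat.cast_mul, Rat.floor_natCast_div_natCast,
    show ((p * i : ℕ) / q + 1 + i + 1 : ℤ) = ((p * i / q + i + 2 : ℕ) : ℤ) by push_cast; ring,
    zpow_natCast, pow_add _ _ 2]
  simp

theorem neg_one_pow_eq_neg_of_odd_add {m n : ℕ} (h : Odd (m + n)) :
    (-1 : ℤˣ) ^ m = -(-1) ^ n := by
  rw [neg_eq_neg_one_mul ((-1) ^ n), ← pow_succ']
  exact neg_one_pow_congr (by grind)

theorem fareySign_two_mul (p : ℕ) {q : ℕ} (hq : 0 < q) : fareySign p q (2 * q) = 1 := by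
  rw [fareySign_eq_neg_one_pow, ← mul_assoc, Nat.mul_div_cancel _ hq]
  exact Even.neg_one_pow ⟨p + q, by ring⟩

theorem fareySign_add {p q k : ℕ} (hpq : p.Coprime q) (hk : 0 < k) (hkq : k < q) :
    fareySign p q (q + k) = -fareySign p q (q - k) := by
  have h_dvd : ¬ q ∣ p * (q + k) := fun h =>
    Nat.not_dvd_of_pos_of_lt hk hkq
      ((Nat.dvd_add_right dvd_rfl).1 (hpq.symm.dvd_of_dvd_mul_left h))
  have h_floors : p * (q + k) / q + p * (q - k) / q + 1 = 2 * p :=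
    div_add_div_add_one_of_add_eq_mul h_dvd (by
      rw [← mul_add, add_add_tsub_cancel hkq.le]
      ring)
  rw [fareySign_eq_neg_one_pow, fareySign_eq_neg_one_pow]
  exact neg_one_pow_eq_neg_of_odd_add (by grind)

variable {p q r s : ℕ}

theorem fareySign_mediant_left (hs : 0 < s) (h : q * r = p * s + 1) {i : ℕ} (hi : i ≤ 2 * q)
    (hne : i ≠ q + s) : fareySign (p + r) (q + s) i = fareySign p q i := by
  rw [fareySign_eq_neg_one_pow, fareySign_eq_neg_one_pow, mediant_mul_div_left hs h hi hne]

theorem fareySign_mediant_right (hq : 0 < q) (h : q * r = p * s + 1) {j : ℕ} (hj_pos : 0 < j)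
    (hj : j ≤ 2 * s) (hne : q + j ≠ s) :
    fareySign (p + r) (q + s) (2 * q + j) = fareySign r s j := by
  rw [fareySign_eq_neg_one_pow, fareySign_eq_neg_one_pow, mediant_mul_div_right hq h hj_pos hj hne]
  exact neg_one_pow_congr (by grind)

theorem fareySign_mediant_middle_left (hq : 0 < q) (h : q * r = p * s + 1) :
    fareySign p q (q + s) = -fareySign (p + r) (q + s) (q + s) := by
  rw [fareySign_eq_neg_one_pow, fareySign_eq_neg_one_pow, Nat.mul_div_cancel _ (by omega),
    ← mul_add_div_add_one_of_neighbours hq h]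
  exact neg_one_pow_eq_neg_of_odd_add (by grind)

theorem fareySign_mediant_middle_right (hq : 0 < q) (hqs : q < s) (h : q * r = p * s + 1) :
    fareySign r s (s - q) = -fareySign (p + r) (q + s) (q + s) := by
  have h_floor : r * (s - q) / s + p + 1 = r := by
    have h_dvd : ¬ s ∣ r * (s - q) := fun h_dvd =>
      Nat.not_dvd_of_pos_of_lt (by omega) (by omega)
        ((coprime_right_of_neighbours h).symm.dvd_of_dvd_mul_left h_dvd)
    have h_compl : r * q / s = p := Nat.div_eq_of_lt_le (by linarith) (by linarith)
    rw [← h_compl]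
    refine div_add_div_add_one_of_add_eq_mul h_dvd ?_
    rw [← mul_add, Nat.sub_add_cancel hqs.le, mul_comm]
  rw [fareySign_eq_neg_one_pow, fareySign_eq_neg_one_pow, Nat.mul_div_cancel _ (by omega)]
  exact neg_one_pow_eq_neg_of_odd_add (by grind)

end Signs

section Words

/-- The generator whose power stands at position `i` of every Farey word: `y` at odd and `x` at
even positions. -/
def fareyGen {G : Type*} (x y : G) (i : ℕ) : G := if i % 2 = 1 then y else x

theorem fareyGen_congr {G : Type*} (x y : G) {i j : ℕ} (h : i % 2 = j % 2) :
    fareyGen x y i = fareyGen x y j := by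
  rw [fareyGen, fareyGen, h]

variable {G : Type*} [Group G]

/-- The `i`-th letter (`1 ≤ i ≤ 2q`) of the Farey word `W_{p/q}` in the elements `x`, `y` of an
arbitrary group. -/
def fareyLetterIn (x y : G) (p q i : ℕ) : G := fareyGen x y i ^ (fareySign p q i : ℤ)

/-- The Farey word `W_{p/q}` in the elements `x`, `y` of an arbitrary group. -/
def fareyWordIn (x y : G) (p q : ℕ) : G := seqProd (fareyLetterIn x y p q) (2 * q)

/-- The Farey word `W_{p/q}` without its last letter, which is always `x`; a conjugate of the
middle letter of `W_{p/q}` when `p` and `q` are coprime. -/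
def fareyCore (x y : G) (p q : ℕ) : G := seqProd (fareyLetterIn x y p q) (2 * q - 1)

variable (x y : G) {p q r s : ℕ}

theorem fareyWordIn_eq_core_mul (p : ℕ) (hq : 0 < q) :
    fareyWordIn x y p q = fareyCore x y p q * x := by
  have h_last : fareyLetterIn x y p q (2 * q) = x := by
    simp [fareyLetterIn, fareyGen, fareySign_two_mul p hq]
  obtain ⟨n, hn⟩ : ∃ n, 2 * q = n + 1 := Nat.exists_eq_succ_of_ne_zero (by omega)
  rw [hn] at h_last
  rw [fareyWordIn, fareyCore, hn, seqProd_succ, h_last, Nat.add_sub_cancel]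

theorem fareyLetterIn_add {k : ℕ} (hpq : p.Coprime q) (hk : 0 < k) (hkq : k < q) :
    fareyLetterIn x y p q (q + k) = (fareyLetterIn x y p q (q - k))⁻¹ := by
  rw [fareyLetterIn, fareyLetterIn, fareySign_add hpq hk hkq, Units.val_neg, zpow_neg,
    fareyGen_congr x y (show (q + k) % 2 = (q - k) % 2 by omega)]

theorem exists_fareyCore_eq_conj (hq : 0 < q) (hpq : p.Coprime q) :
    ∃ g : G, fareyCore x y p q = g * fareyLetterIn x y p q q * g⁻¹ := by
  obtain ⟨n, rfl⟩ : ∃ n, q = n + 1 := Nat.exists_eq_succ_of_ne_zero hq.ne'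
  exact ⟨_, seqProd_eq_conj_of_antisymm fun k hk hkn =>
    fareyLetterIn_add x y hpq hk (by omega)⟩

theorem fareyWordIn_mul_fareyCore (hq : 0 < q) (hs : 0 < s) (h : q * r = p * s + 1) :
    fareyWordIn x y p q * fareyCore x y r s = (fareyCore x y (p + r) (q + s))⁻¹ := by
  set c := fareyLetterIn x y (p + r) (q + s) with hc
  set d := Function.update c (q + s) (c (q + s))⁻¹ with hd
  have hd_ne {i : ℕ} (hi : i ≠ q + s) : d i = c i := Function.update_of_ne hi _ _
  have hd_self : d (q + s) = (c (q + s))⁻¹ := Function.update_self ..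
  have h_left (i : ℕ) (hi : i ≤ 2 * q) : fareyLetterIn x y p q i = d i := by
    rcases eq_or_ne i (q + s) with rfl | hne
    · rw [hd_self, hc, fareyLetterIn, fareyLetterIn, fareySign_mediant_middle_left hq h,
        Units.val_neg, zpow_neg]
    · rw [hd_ne hne, hc, fareyLetterIn, fareyLetterIn, fareySign_mediant_left hs h hi hne]
  have h_right (j : ℕ) (hj : 0 < j) (hjs : j ≤ 2 * s) :
      fareyLetterIn x y r s j = d (2 * q + j) := by
    have h_gen := fareyGen_congr x y (show j % 2 = (2 * q + j) % 2 by omega)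
    rcases eq_or_ne (q + j) s with heq | hne
    · rw [show 2 * q + j = q + s by omega] at h_gen ⊢
      rw [hd_self, hc, fareyLetterIn, fareyLetterIn, h_gen, show j = s - q by omega,
        fareySign_mediant_middle_right hq (by omega) h, Units.val_neg, zpow_neg]
    · rw [hd_ne (by omega), hc, fareyLetterIn, fareyLetterIn, h_gen,
        fareySign_mediant_right hq h hj hjs hne]
  have h_coprime : (p + r).Coprime (q + s) :=
    coprime_left_of_neighbours (r := r) (s := s) (by linear_combination h)
  obtain ⟨n, hn⟩ : ∃ n, q + s = n + 1 := Nat.exists_eq_succ_of_ne_zero (by omega)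
  rw [fareyWordIn, fareyCore, fareyCore, seqProd_congr fun i _ => h_left i,
    seqProd_congr fun j hj hjs => h_right j hj (by omega), ← seqProd_add, ← hc, hd,
    show 2 * q + (2 * s - 1) = 2 * n + 1 by omega, show 2 * (q + s) - 1 = 2 * n + 1 by omega, hn]
  refine seqProd_update_inv_of_antisymm fun k hk hkn => ?_
  rw [hc, ← hn]
  exact fareyLetterIn_add x y h_coprime hk (by omega)

end Words

section Traces

/-- The trace of an element of `SL(2, R)`. -/
def trSL {R : Type*} [CommRing R] (g : SL(2, R)) : R := (g : Matrix (Fin 2) (Fin 2) R).trace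

variable {R : Type*} [CommRing R]

theorem trSL_mul_comm (g h : SL(2, R)) : trSL (g * h) = trSL (h * g) := by
  rw [trSL, trSL, Matrix.SpecialLinearGroup.coe_mul, Matrix.SpecialLinearGroup.coe_mul,
    Matrix.trace_mul_comm]

theorem trSL_conj (g h : SL(2, R)) : trSL (g * h * g⁻¹) = trSL h := by
  rw [trSL_mul_comm, inv_mul_cancel_left]

theorem trSL_inv (g : SL(2, R)) : trSL g⁻¹ = trSL g := by
  simp [trSL, Matrix.SpecialLinearGroup.coe_inv, Matrix.adjugate_fin_two,
    Matrix.trace_fin_two, add_comm]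

theorem trSL_mul_trSL (g h : SL(2, R)) : trSL g * trSL h = trSL (g * h) + trSL (g * h⁻¹) := by
  simp only [trSL, Matrix.SpecialLinearGroup.coe_mul, Matrix.SpecialLinearGroup.coe_inv,
    Matrix.adjugate_fin_two, Matrix.trace_fin_two, Matrix.mul_apply, Fin.sum_univ_two,
    Matrix.of_apply, Matrix.cons_val', Matrix.cons_val_zero, Matrix.cons_val_one,
    Matrix.cons_val_fin_one]
  ring

theorem trSL_zpow_units (g : SL(2, R)) (e : ℤˣ) : trSL (g ^ (e : ℤ)) = trSL g := by
  rcases Int.units_eq_one_or e with rfl | rfl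
  · simp
  · simp [trSL_inv]

theorem trSL_recursion_of_mul_eq_inv {x a b c w : SL(2, R)} (hc : a * x * b = c⁻¹)
    (hw : w * b = a⁻¹) :
    trSL (a * x) * trSL (b * x) + trSL (c * x) + trSL w =
      trSL c * trSL x + trSL a * trSL b := by
  have h_prod : trSL (a * x) * trSL (b * x) = trSL (c * x⁻¹) + trSL (a * b⁻¹) := by
    rw [trSL_mul_trSL, ← mul_assoc, hc, ← trSL_inv (c⁻¹ * x), trSL_mul_comm c]
    congr 2 <;> group
  have h_w : trSL w = trSL (a * b) := by
    rw [eq_mul_inv_of_mul_eq hw, ← mul_inv_rev, trSL_inv, trSL_mul_comm]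
  rw [h_prod, h_w, trSL_mul_trSL, trSL_mul_trSL]
  ring

variable (x y : SL(2, R)) {p q r s : ℕ}

theorem trSL_fareyCore (hq : 0 < q) (hpq : p.Coprime q) :
    trSL (fareyCore x y p q) = trSL (fareyGen x y q) := by
  obtain ⟨g, hg⟩ := exists_fareyCore_eq_conj x y hq hpq
  rw [hg, trSL_conj, fareyLetterIn, trSL_zpow_units]

theorem trSL_fareyWordIn_recursion (hs : 0 < s) (hsq : s < q) (h : q * r = p * s + 1) :
    trSL (fareyWordIn x y p q) * trSL (fareyWordIn x y r s) +
        trSL (fareyWordIn x y (p + r) (q + s)) + trSL (fareyWordIn x y (p - r) (q - s)) =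
      trSL (fareyGen x y (q + s)) * trSL x + trSL (fareyGen x y q) * trSL (fareyGen x y s) := by
  obtain ⟨u, rfl⟩ : ∃ u, p = u + r := Nat.exists_eq_add_of_le' (by by_contra!; nlinarith)
  obtain ⟨v, rfl⟩ : ∃ v, q = v + s := Nat.exists_eq_add_of_le' hsq.le
  have h_diff : v * r = u * s + 1 := by linarith
  have h_mediant : (v + s + s) * r = (u + r + r) * s + 1 := by linarith
  have hq : 0 < v + s := by omega
  rw [Nat.add_sub_cancel, Nat.add_sub_cancel,
    ← trSL_fareyCore x y (by omega) (coprime_left_of_neighbours h_mediant),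
    ← trSL_fareyCore x y hq (coprime_left_of_neighbours h),
    ← trSL_fareyCore x y hs (coprime_right_of_neighbours h),
    fareyWordIn_eq_core_mul x y (u + r) hq, fareyWordIn_eq_core_mul x y r hs,
    fareyWordIn_eq_core_mul x y (u + r + r) (by omega)]
  refine trSL_recursion_of_mul_eq_inv ?_ (fareyWordIn_mul_fareyCore x y (by omega) hs h_diff)
  rw [← fareyWordIn_eq_core_mul x y (u + r) hq, fareyWordIn_mul_fareyCore x y hq hs h]

end Traces

section FareyPolynomials

/-- `X = [[α, 1], [0, α⁻¹]]` as an element of `SL(2, ℂ)`. -/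
noncomputable def xSL {α : ℂ} (hα : α ≠ 0) : SL(2, ℂ) := ⟨Xmat α, by simp [Xmat, hα]⟩

/-- `Y = [[β, 0], [z, β⁻¹]]` as an element of `SL(2, ℂ)`. -/
noncomputable def ySL {β : ℂ} (hβ : β ≠ 0) (z : ℂ) : SL(2, ℂ) := ⟨Ymat β z, by simp [Ymat, hβ]⟩

variable {n R : Type*} [Fintype n] [DecidableEq n] [CommRing R]

theorem coe_zpow_units (g : Matrix.SpecialLinearGroup n R) (e : ℤˣ) :
    ((g ^ (e : ℤ) : Matrix.SpecialLinearGroup n R) : Matrix n n R) =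
      if e = 1 then (g : Matrix n n R) else (g : Matrix n n R)⁻¹ := by
  rcases Int.units_eq_one_or e with rfl | rfl
  · simp
  · simp [Matrix.inv_def]

theorem coe_seqProd (f : ℕ → Matrix.SpecialLinearGroup n R) (m : ℕ) :
    ((seqProd f m : Matrix.SpecialLinearGroup n R) : Matrix n n R) =
      seqProd (fun i => (f i : Matrix n n R)) m := by
  induction m with
  | zero => rfl
  | succ m ih => rw [seqProd_succ, seqProd_succ, Matrix.SpecialLinearGroup.coe_mul, ih]

variable {α β : ℂ} (hα : α ≠ 0) (hβ : β ≠ 0) (z : ℂ)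

theorem coe_fareyLetterIn (p q i : ℕ) :
    ((fareyLetterIn (xSL hα) (ySL hβ z) p q i : SL(2, ℂ)) : Matrix (Fin 2) (Fin 2) ℂ) =
      fareyLetterM α β z p q i := by
  rw [fareyLetterIn, coe_zpow_units, fareyLetterM, fareyGen]
  split_ifs <;> rfl

theorem fareyPoly_eq_trSL (p q : ℕ) :
    fareyPoly α β z p q = trSL (fareyWordIn (xSL hα) (ySL hβ z) p q) := by
  rw [fareyPoly, fareyWord, trSL, fareyWordIn, coe_seqProd]
  simp only [coe_fareyLetterIn, seqProd]

theorem trSL_xSL : trSL (xSL hα) = α + α⁻¹ := by simp [trSL, xSL, Xmat, Matrix.trace_fin_two]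

theorem trSL_ySL : trSL (ySL hβ z) = β + β⁻¹ := by simp [trSL, ySL, Ymat, Matrix.trace_fin_two]

end FareyPolynomials

theorem recursion_parabolic_general {α β : ℂ} (hα : α ≠ 0) (hβ : β ≠ 0) (z : ℂ) {p q r s : ℕ}
    (hs : 1 ≤ s) (hsq : s < q) (hnbr : q * r = p * s + 1) :
    fareyPoly α β z p q * fareyPoly α β z r s + fareyPoly α β z (p + r) (q + s) +
        fareyPoly α β z (p - r) (q - s) =
      if Even (q + s) then (α + α⁻¹) ^ 2 + (β + β⁻¹) ^ 2 else 2 * (α + α⁻¹) * (β + β⁻¹) := by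
  have h_not_both_even : ¬ (Even q ∧ Even s) := by
    rintro ⟨hq, hs⟩
    exact Nat.not_even_one ((Nat.even_add.1 (hnbr ▸ hq.mul_right r)).1 (hs.mul_left p))
  simp only [fareyPoly_eq_trSL hα hβ, trSL_fareyWordIn_recursion _ _ hs hsq hnbr, fareyGen,
    apply_ite trSL, trSL_xSL, trSL_ySL, ← Nat.odd_iff]
  rcases Nat.even_or_odd q with hq | hq <;> rcases Nat.even_or_odd s with hs | hs
  · exact absurd ⟨hq, hs⟩ h_not_both_even
  all_goals grind

/-- Recursion formula in the parabolic case `α = β = 1`: for Farey neighbours `p/q < r/s`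
in `[0,1]` with `s < q`, `Φ_{p/q} Φ_{r/s} + Φ_{(p+r)/(q+s)} + Φ_{(p−r)/(q−s)} = 8`. -/
theorem recursion_parabolic (z : ℂ)
    (p q r s : ℕ) (hs : 1 ≤ s) (hsq : s < q) (hpq : p ≤ q) (hrs : r ≤ s)
    (hcop1 : Nat.Coprime p q) (hcop2 : Nat.Coprime r s) (hnbr : q * r = p * s + 1) :
    fareyPoly 1 1 z p q * fareyPoly 1 1 z r s + fareyPoly 1 1 z (p + r) (q + s) +
      fareyPoly 1 1 z (p - r) (q - s) = 8 := by
  rw [recursion_parabolic_general one_ne_zero one_ne_zero z hs hsq hnbr]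
  split_ifs <;> norm_num
end

section
/- Let R be a commutative ring and let d be a function from normalised pairs to the units of R which is multiplicative on Farey neighbours, i.e. d(γ ⊕ β) = d(γ)·d(β) whenever γ, β are Farey neighbours. Let F be a Farey recursive function with anti-determinant d, let γ_L, γ_R be Farey neighbours with mediant α = γ_L ⊕ γ_R, let (β_k)_{k∈ℤ} be the associated boundary sequence, and set M_α = [[0, 1], [−d(α), −F(α)]]. Then M_α^{−1} · (F(β_0), F(β_1))ᵀ = (d(β_0) d(α)^{−1} F(β_{−1}), F(β_0))ᵀ and M_α^{−2} · (F(β_0), F(β_1))ᵀ = (d(α)^{−1} d(β_{−1})^{−1} F(β_{−2}), d(β_{−1})^{−1} F(β_{−1}))ᵀ. -/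
/-- A normalised pair `(p, q) ∈ ℤ × ℤ` representing an extended rational: `gcd(p,q) = 1`
and either `q > 0`, or `q = 0` and `p = 1` (representing `∞`). -/
def Normalised (x : ℤ × ℤ) : Prop :=
  Int.gcd x.1 x.2 = 1 ∧ (0 < x.2 ∨ (x.2 = 0 ∧ x.1 = 1))

/-- Two pairs `(p,q)` and `(r,s)` are Farey neighbours if `|ps − qr| = 1`.
Their mediant is the componentwise sum `(p+r, q+s)`. -/
def FareyNbr (x y : ℤ × ℤ) : Prop := (x.1 * y.2 - x.2 * y.1).natAbs = 1

/-- `d` is multiplicative on Farey neighbours: `d(γ ⊕ β) = d(γ)·d(β)`. -/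
def MultiplicativeOnNbrs {R : Type*} [CommRing R] (d : ℤ × ℤ → Rˣ) : Prop :=
  ∀ γ β : ℤ × ℤ, Normalised γ → Normalised β → FareyNbr γ β → d (γ + β) = d γ * d β

/-- `F` is a Farey recursive function with anti-determinant `d`:
`F((γ ⊕ α) ⊕ α) = −d(α)·F(γ) − F(α)·F(γ ⊕ α)` for Farey neighbours `γ, α`. -/
def IsFareyRecursive {R : Type*} [CommRing R] (d : ℤ × ℤ → Rˣ) (F : ℤ × ℤ → R) : Prop :=
  ∀ γ α : ℤ × ℤ, Normalised γ → Normalised α → FareyNbr γ α →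
    F (γ + α + α) = -(d α : R) * F γ - F α * F (γ + α)

/-!
Around its centre the boundary sequence runs
`…, γR ⊕ γL ⊕ γL, γL, γR, γL ⊕ γR ⊕ γR, …`, and the two steps of `M_α⁻¹` cross the break between
`γL` and `γR`. There the Farey recursions with increments `γR` and `γL` take the place of the one
with increment `α = γL ⊕ γR`. Since `d α = d γL * d γR`, rescaling `F γL` by `(d γL)⁻¹` turns the
recursion with increment `γR` into the one that `M_α` encodes, and a further factor `(d α)⁻¹` on
`F (γR ⊕ γL ⊕ γL)` does the same for the recursion with increment `γL`.
-/

open scoped Matrix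

theorem FareyNbr.symm {x y : ℤ × ℤ} (h : FareyNbr x y) : FareyNbr y x := by
  rw [FareyNbr, ← h, ← Int.natAbs_neg]
  ring_nf

/-- The boundary sequence `(β_k)` of the Farey neighbours `γL, γR`, bi-infinite around the terms
`β_{-1} = γL` and `β_0 = γR`. -/
def boundarySeq (γL γR : ℤ × ℤ) (k : ℤ) : ℤ × ℤ :=
  if 0 ≤ k then γR + k • (γL + γR) else γL + (-k - 1) • (γL + γR)

section boundarySeq

variable (γL γR : ℤ × ℤ)

theorem boundarySeq_neg_two : boundarySeq γL γR (-2) = γR + γL + γL := by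
  change γL + (1 : ℤ) • (γL + γR) = _
  rw [one_smul]
  abel

theorem boundarySeq_neg_one : boundarySeq γL γR (-1) = γL := by
  simp [boundarySeq]

theorem boundarySeq_zero : boundarySeq γL γR 0 = γR := by
  simp [boundarySeq]

theorem boundarySeq_one : boundarySeq γL γR 1 = γL + γR + γR := by
  change γR + (1 : ℤ) • (γL + γR) = _
  rw [one_smul]
  abel

end boundarySeq

/-- The matrix advancing a window of two consecutive terms of a sequence satisfying
`s (k + 2) = -a * s k - b * s (k + 1)`; with `a = d α` and `b = F α` it is `M_α`. -/
def recursionMatrix {R : Type*} [Ring R] (a b : R) : Matrix (Fin 2) (Fin 2) R :=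
  !![0, 1; -a, -b]

theorem recursionMatrix_mulVec {R : Type*} [Ring R] (a b x y : R) :
    recursionMatrix a b *ᵥ ![x, y] = ![y, -a * x - b * y] := by
  ext i
  fin_cases i <;> simp [recursionMatrix, Matrix.mulVec, dotProduct, sub_eq_add_neg]

theorem isUnit_det_recursionMatrix {R : Type*} [CommRing R] {a : R} (ha : IsUnit a) (b : R) :
    IsUnit (recursionMatrix a b).det := by
  simpa [recursionMatrix, Matrix.det_fin_two_of] using ha

theorem inv_recursionMatrix_mulVec {R : Type*} [CommRing R] {a b x y z : R} (ha : IsUnit a)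
    (h : z = -a * x - b * y) : (recursionMatrix a b)⁻¹ *ᵥ ![y, z] = ![x, y] := by
  rw [h, ← recursionMatrix_mulVec, Matrix.mulVec_mulVec,
    Matrix.nonsing_inv_mul _ (isUnit_det_recursionMatrix ha b), Matrix.one_mulVec]

namespace IsFareyRecursive

variable {R : Type*} [CommRing R] {d : ℤ × ℤ → Rˣ} {F : ℤ × ℤ → R} {γL γR : ℤ × ℤ}

theorem inv_recursionMatrix_mulVec_right (hF : IsFareyRecursive d F)
    (hγL : Normalised γL) (hγR : Normalised γR) (hnbr : FareyNbr γL γR)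
    (hdα : d (γL + γR) = d γL * d γR) :
    (recursionMatrix (d (γL + γR) : R) (F (γL + γR)))⁻¹ *ᵥ ![F γR, F (γL + γR + γR)] =
      ![((d γL)⁻¹ : Rˣ) * F γL, F γR] := by
  apply inv_recursionMatrix_mulVec (d (γL + γR)).isUnit
  have cancel : (d (γL + γR) : R) * ((d γL)⁻¹ : Rˣ) = d γR := by
    rw [← Units.val_mul, hdα, mul_comm (d γL), mul_inv_cancel_right]
  calc F (γL + γR + γR)
      = -(d γR : R) * F γL - F γR * F (γL + γR) := hF γL γR hγL hγR hnbr
    _ = -(d (γL + γR) : R) * (((d γL)⁻¹ : Rˣ) * F γL) - F (γL + γR) * F γR := by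
        rw [← cancel]
        ring

theorem inv_recursionMatrix_mulVec_left (hF : IsFareyRecursive d F)
    (hγL : Normalised γL) (hγR : Normalised γR) (hnbr : FareyNbr γL γR) :
    (recursionMatrix (d (γL + γR) : R) (F (γL + γR)))⁻¹ *ᵥ ![((d γL)⁻¹ : Rˣ) * F γL, F γR] =
      ![((d (γL + γR))⁻¹ * (d γL)⁻¹ : Rˣ) * F (γR + γL + γL), ((d γL)⁻¹ : Rˣ) * F γL] := by
  apply inv_recursionMatrix_mulVec (d (γL + γR)).isUnit
  have hrec : F (γR + γL + γL) = -(d γL : R) * F γR - F γL * F (γL + γR) := by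
    rw [hF γR γL hγR hγL hnbr.symm, add_comm γR γL]
  calc F γR
      = -((d γL)⁻¹ : Rˣ) * F (γR + γL + γL) - F (γL + γR) * (((d γL)⁻¹ : Rˣ) * F γL) := by
        rw [hrec]
        linear_combination -F γR * (d γL).inv_mul
    _ = -(d (γL + γR) : R) * (((d (γL + γR))⁻¹ * (d γL)⁻¹ : Rˣ) * F (γR + γL + γL)) -
          F (γL + γR) * (((d γL)⁻¹ : Rˣ) * F γL) := by
        rw [Units.val_mul, mul_assoc, neg_mul _ (_ * _), Units.mul_inv_cancel_left, neg_mul]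

end IsFareyRecursive

/-- The key lemma: the action of `M_α^{−1}` and `M_α^{−2}` on the vector
`(F(β_0), F(β_1))ᵀ`, where `M_α = [[0, 1], [−d(α), −F(α)]]`. -/
theorem farey_recursive_inverse_steps {R : Type*} [CommRing R] (d : ℤ × ℤ → Rˣ) (F : ℤ × ℤ → R)
    (hd : MultiplicativeOnNbrs d) (hF : IsFareyRecursive d F)
    (γL γR : ℤ × ℤ) (hγL : Normalised γL) (hγR : Normalised γR) (hnbr : FareyNbr γL γR)
    (α : ℤ × ℤ) (hα : α = γL + γR)
    (β : ℤ → ℤ × ℤ) (hβ : ∀ k : ℤ, β k = if 0 ≤ k then γR + k • α else γL + (-k - 1) • α)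
    (M : Matrix (Fin 2) (Fin 2) R) (hM : M = !![0, 1; -(d α : R), -F α]) :
    (M ^ (-1 : ℤ)).mulVec ![F (β 0), F (β 1)] =
      ![((d (β 0) * (d α)⁻¹ : Rˣ) : R) * F (β (-1)), F (β 0)] ∧
    (M ^ (-2 : ℤ)).mulVec ![F (β 0), F (β 1)] =
      ![(((d α)⁻¹ * (d (β (-1)))⁻¹ : Rˣ) : R) * F (β (-2)),
        (((d (β (-1)))⁻¹ : Rˣ) : R) * F (β (-1))] := by
  obtain rfl : β = boundarySeq γL γR := funext fun k => by rw [hβ, hα, boundarySeq]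
  obtain rfl : M = recursionMatrix (d α : R) (F α) := hM
  subst hα
  have hdα : d (γL + γR) = d γL * d γR := hd γL γR hγL hγR hnbr
  have hcoeff : d γR * (d (γL + γR))⁻¹ = (d γL)⁻¹ := by
    rw [hdα, mul_inv_rev, mul_inv_cancel_left]
  have hdet := isUnit_det_recursionMatrix (d (γL + γR)).isUnit (F (γL + γR))
  have inv_right := hF.inv_recursionMatrix_mulVec_right hγL hγR hnbr hdα
  have inv_left := hF.inv_recursionMatrix_mulVec_left hγL hγR hnbr
  rw [boundarySeq_neg_two, boundarySeq_neg_one, boundarySeq_zero, boundarySeq_one, hcoeff]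
  refine ⟨by rw [Matrix.zpow_neg_one, inv_right], ?_⟩
  rw [← Matrix.inv_zpow' hdet, zpow_ofNat, sq, ← Matrix.mulVec_mulVec, inv_right, inv_left]
end

section
/- Let R be a commutative ring and let F be a homogeneous Farey recursive function with values in R. Let δ and α be normalised pairs which are Farey neighbours, and for each integer n ≥ −1 set γ_n = δ + (n+1)·α (componentwise addition of pairs), so that γ_{−1} = δ and γ_{n+1} = γ_n ⊕ α. Then for every n ≥ 0 one has F(γ_{n+1}) = −F(α)·F(γ_n) − F(γ_{n−1}); that is, the sequence (F(γ_n))_{n ≥ −1} satisfies the Chebyshev recurrence c_{n+1} = 2t·c_n − c_{n−1} with parameter t = −F(α)/2. -/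
/-- `F` is a homogeneous Farey recursive function:
`F((γ ⊕ α) ⊕ α) = −F(γ) − F(α)·F(γ ⊕ α)` for Farey neighbours `γ, α`. -/
def IsHomFareyRecursive {R : Type*} [CommRing R] (F : ℤ × ℤ → R) : Prop :=
  ∀ γ α : ℤ × ℤ, Normalised γ → Normalised α → FareyNbr γ α →
    F (γ + α + α) = -F γ - F α * F (γ + α)

/-!
Adding `α` to a Farey neighbour `γ` of `α` does not change the determinant `ps − qr`, so `γ + α` is
again a Farey neighbour of `α` and has coprime entries. Its second entry is positive, since two
pairs representing `∞` are not neighbours. Hence every `δ + n • α` with `0 ≤ n` is a normalised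
Farey neighbour of `α`, and the recurrence is the defining relation of `F` at `(δ + n • α, α)`.
-/

section

variable {x y : ℤ × ℤ}

theorem fareyNbr_iff_isUnit : FareyNbr x y ↔ IsUnit (x.1 * y.2 - x.2 * y.1) :=
  Int.isUnit_iff_natAbs_eq.symm

theorem fareyNbr_add_zsmul_left (n : ℤ) : FareyNbr (x + n • y) y ↔ FareyNbr x y := by
  have hdet : (x + n • y).1 * y.2 - (x + n • y).2 * y.1 = x.1 * y.2 - x.2 * y.1 := by
    simp only [Prod.fst_add, Prod.snd_add, Prod.smul_fst, Prod.smul_snd, smul_eq_mul]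
    ring
  rw [FareyNbr, hdet, FareyNbr]

theorem fareyNbr_add_left : FareyNbr (x + y) y ↔ FareyNbr x y := by
  simpa only [one_smul] using fareyNbr_add_zsmul_left (x := x) (y := y) 1

theorem FareyNbr.isCoprime (h : FareyNbr x y) : IsCoprime x.1 x.2 := by
  obtain ⟨u, hu⟩ := (fareyNbr_iff_isUnit.mp h).exists_left_inv
  exact ⟨u * y.2, -(u * y.1), by linear_combination hu⟩

theorem Normalised.snd_nonneg (hx : Normalised x) : 0 ≤ x.2 :=
  hx.2.elim le_of_lt fun h => h.1.ge

theorem FareyNbr.snd_ne_zero_or_snd_ne_zero (h : FareyNbr x y) : x.2 ≠ 0 ∨ y.2 ≠ 0 := by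
  by_contra! h_zero
  simp [FareyNbr, h_zero] at h

theorem Normalised.add (hx : Normalised x) (hy : Normalised y)
    (h : FareyNbr x y) : Normalised (x + y) := by
  have h_pos : 0 < x.2 + y.2 := by
    have hx_nonneg := hx.snd_nonneg
    have hy_nonneg := hy.snd_nonneg
    have h_ne := h.snd_ne_zero_or_snd_ne_zero
    omega
  exact ⟨Int.isCoprime_iff_gcd_eq_one.mp (fareyNbr_add_left.mpr h).isCoprime, Or.inl h_pos⟩

theorem Normalised.add_zsmul (hx : Normalised x) (hy : Normalised y)
    (h : FareyNbr x y) {n : ℤ} (hn : 0 ≤ n) : Normalised (x + n • y) := by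
  induction n, hn using Int.leInduction with
  | base => simpa only [zero_smul, add_zero] using hx
  | succ n _ ih =>
    rw [add_one_zsmul, ← add_assoc]
    exact ih.add hy ((fareyNbr_add_zsmul_left n).mpr h)

end

/-- Along the constant-difference sequence `γ_n = δ + (n+1)·α` (for Farey neighbours `δ, α`),
a homogeneous Farey recursive function satisfies the Chebyshev-like recurrence
`F(γ_{n+1}) = −F(α)·F(γ_n) − F(γ_{n−1})`. -/
theorem hom_farey_recursive_chebyshev {R : Type*} [CommRing R] (F : ℤ × ℤ → R)
    (hF : IsHomFareyRecursive F)
    (δ α : ℤ × ℤ) (hδ : Normalised δ) (hα : Normalised α) (hnbr : FareyNbr δ α)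
    (γ : ℤ → ℤ × ℤ) (hγ : ∀ n : ℤ, γ n = δ + (n + 1) • α) :
    ∀ n : ℤ, 0 ≤ n → F (γ (n + 1)) = -F α * F (γ n) - F (γ (n - 1)) := by
  intro n hn
  have hrec := hF (δ + n • α) α (hδ.add_zsmul hα hnbr hn) hα
    ((fareyNbr_add_zsmul_left n).mpr hnbr)
  have h_pred : γ (n - 1) = δ + n • α := by rw [hγ, sub_add_cancel]
  have h_self : γ n = δ + n • α + α := by rw [hγ]; module
  have h_succ : γ (n + 1) = δ + n • α + α + α := by rw [hγ]; module
  rw [h_pred, h_self, h_succ, hrec]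
  ring
end
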